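/- For all integers m ≥ 0 and l ∈ ℤ, one has S_{m+1,l}(q) = q^{−m−l−1} S_{m,l+1}(q) + S_{m,l}(q) + q^{−m+l−1} S̃_{m,l−1}(q), an identity in ℤ[q, q⁻¹]. -/

import Mathlib

/-!
Put `k = m + 1 - l - ν`. After shifting `ν` to `ν - 1` in `S_{m,l+1}` and `S_{m,l}`, the recursion
holds term by term in `ν`: up to a common power of `q` it is the `q`-trinomial Pascal rule
`C(m+1,ν) C(ν,k) = C(m,ν-1) C(ν-1,k-1) + q^(k+m+1-ν) C(m,ν-1) C(ν-1,k) + q^k C(m,ν) C(ν,k)`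
(`qtrinomial`). That rule follows from the two `q`-Pascal rules (`qbinomZ_pascal`,
`qbinomZ_pascal'`), the absorption identity `(1 - q^k) C(ν,k) = (1 - q^ν) C(ν-1,k-1)`
(`qbinomZ_absorb`) and `(1 - q^ν) C(m,ν) = (1 - q^(m-ν+1)) C(m,ν-1)` (`qbinomZ_step`).
-/

open LaurentPolynomial

/-- The Gaussian (q-)binomial coefficient `C(n,k)_q` as a Laurent polynomial in `q`,
defined by the q-Pascal recursion `C(n+1,k+1)_q = C(n,k)_q + q^(k+1) C(n,k+1)_q`. -/
noncomputable def qbinom : ℕ → ℕ → LaurentPolynomial ℤ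
  | _, 0 => 1
  | 0, _ + 1 => 0
  | n + 1, k + 1 => qbinom n k + T ((k : ℤ) + 1) * qbinom n (k + 1)

/-- `C(n,k)_q` for integer arguments, zero unless `0 ≤ k ≤ n`. -/
noncomputable def qbinomZ (n k : ℤ) : LaurentPolynomial ℤ :=
  if 0 ≤ k ∧ k ≤ n then qbinom n.toNat k.toNat else 0

/-- `S_{m,l}(q) = Σ_{ν∈ℤ} q^{(ν+l−m)(ν+l)+ν(ν−m)} C(m,ν)_q C(ν, m−l−ν)_q`. -/
noncomputable def Sq (m : ℕ) (l : ℤ) : LaurentPolynomial ℤ :=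
  ∑ᶠ ν : ℤ,
    T ((ν + l - m) * (ν + l) + ν * (ν - m)) * (qbinomZ m ν * qbinomZ ν (m - l - ν))

/-- `S̃_{m,l}(q) = Σ_{ν∈ℤ} q^{(ν+l−m)(ν+l−1)+ν(ν−m)} C(m,ν)_q C(ν, m−l−ν)_q`. -/
noncomputable def Sqt (m : ℕ) (l : ℤ) : LaurentPolynomial ℤ :=
  ∑ᶠ ν : ℤ,
    T ((ν + l - m) * (ν + l - 1) + ν * (ν - m)) * (qbinomZ m ν * qbinomZ ν (m - l - ν))

theorem qbinom_zero_right (n : ℕ) : qbinom n 0 = 1 := by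
  cases n <;> rw [qbinom]

theorem qbinom_succ (n k : ℕ) :
    qbinom (n + 1) (k + 1) = qbinom n k + T ((k : ℤ) + 1) * qbinom n (k + 1) := by
  rw [qbinom]

theorem qbinom_eq_zero_of_lt : ∀ n k : ℕ, n < k → qbinom n k = 0
  | _, 0, h => absurd h (Nat.not_lt_zero _)
  | 0, _ + 1, _ => by rw [qbinom]
  | n + 1, k + 1, h => by
    rw [qbinom_succ, qbinom_eq_zero_of_lt n k (by omega),
      qbinom_eq_zero_of_lt n (k + 1) (by omega)]
    simp

/-- Ratio of neighbouring entries in a row, with the denominators cleared. The exponent `n - k` is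
an integer, so no assumption `k ≤ n` is needed. -/
theorem qbinom_step : ∀ n k : ℕ,
    (1 - T ((k : ℤ) + 1)) * qbinom n (k + 1) = (1 - T ((n : ℤ) - k)) * qbinom n k
  | 0, 0 => by simp [qbinom]
  | 0, k + 1 => by simp [qbinom]
  | n + 1, 0 => by
    have h := qbinom_step n 0
    have e : (T ((n : ℤ) + 1) : LaurentPolynomial ℤ) = T (n : ℤ) * T 1 := T_add _ _
    rw [qbinom_succ, qbinom_zero_right, qbinom_zero_right]
    rw [qbinom_zero_right] at h
    push_cast at h ⊢
    simp only [sub_zero] at h ⊢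
    rw [e]
    linear_combination T 1 * h
  | n + 1, k + 1 => by
    have h := qbinom_step n k
    have h' := qbinom_step n (k + 1)
    have e1 : (T ((k : ℤ) + 1 + 1) * T ((n : ℤ) - (k + 1)) : LaurentPolynomial ℤ)
        = T ((n : ℤ) + 1) := by rw [← T_add]; congr 1; ring
    have e2 : (T ((k : ℤ) + 1) * T ((n : ℤ) - k) : LaurentPolynomial ℤ)
        = T ((n : ℤ) + 1) := by rw [← T_add]; congr 1; ring
    have e3 : ((n : ℤ) + 1 - (k + 1)) = n - k := by ring
    rw [qbinom_succ, qbinom_succ]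
    push_cast at h h' ⊢
    rw [e3]
    linear_combination T ((k : ℤ) + 1 + 1) * h' + h + qbinom n (k + 1) * (e2 - e1)

theorem qbinomZ_of_neg (n : ℤ) {k : ℤ} (h : k < 0) : qbinomZ n k = 0 :=
  if_neg (by omega)

theorem qbinomZ_of_lt {n k : ℤ} (h : n < k) : qbinomZ n k = 0 :=
  if_neg (by omega)

theorem qbinomZ_natCast (n k : ℕ) : qbinomZ n k = qbinom n k := by
  unfold qbinomZ
  split_ifs with h
  · simp
  · exact (qbinom_eq_zero_of_lt n k (by omega)).symm

theorem qbinomZ_zero_right {n : ℤ} (hn : 0 ≤ n) : qbinomZ n 0 = 1 := by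
  lift n to ℕ using hn
  simpa [qbinom_zero_right] using qbinomZ_natCast n 0

theorem qbinomZ_pascal {n : ℤ} (hn : 0 ≤ n) (k : ℤ) :
    qbinomZ (n + 1) k = qbinomZ n (k - 1) + T k * qbinomZ n k := by
  rcases lt_trichotomy k 0 with h | rfl | h
  · rw [qbinomZ_of_neg _ h, qbinomZ_of_neg _ h, qbinomZ_of_neg _ (by omega)]; simp
  · rw [qbinomZ_zero_right hn, qbinomZ_zero_right (by omega), qbinomZ_of_neg _ (by omega)]; simp
  · lift n to ℕ using hn
    obtain ⟨j, rfl⟩ : ∃ j : ℕ, k = j + 1 := ⟨(k - 1).toNat, by omega⟩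
    have := qbinom_succ n j
    simp only [← qbinomZ_natCast] at this
    push_cast at this
    simpa using this

theorem qbinomZ_step {n : ℤ} (hn : 0 ≤ n) (k : ℤ) :
    (1 - T k) * qbinomZ n k = (1 - T (n + 1 - k)) * qbinomZ n (k - 1) := by
  rcases lt_trichotomy k 0 with h | rfl | h
  · rw [qbinomZ_of_neg _ h, qbinomZ_of_neg _ (by omega)]; simp
  · rw [qbinomZ_of_neg n (k := 0 - 1) (by omega)]; simp
  · lift n to ℕ using hn
    obtain ⟨j, rfl⟩ : ∃ j : ℕ, k = j + 1 := ⟨(k - 1).toNat, by omega⟩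
    have := qbinom_step n j
    simp only [← qbinomZ_natCast] at this
    push_cast at this
    simpa using this

theorem qbinomZ_pascal' {n : ℤ} (hn : 0 ≤ n) (k : ℤ) :
    qbinomZ (n + 1) k = T (n + 1 - k) * qbinomZ n (k - 1) + qbinomZ n k := by
  linear_combination qbinomZ_pascal hn k - qbinomZ_step hn k

theorem qbinomZ_absorb {n : ℤ} (hn : 0 ≤ n) (k : ℤ) :
    (1 - T k) * qbinomZ (n + 1) k = (1 - T (n + 1)) * qbinomZ n (k - 1) := by
  have e : (T k * T (n + 1 - k) : LaurentPolynomial ℤ) = T (n + 1) := by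
    rw [← T_add]; congr 1; ring
  linear_combination (1 - T k) * qbinomZ_pascal hn k + T k * qbinomZ_step hn k
    - qbinomZ n (k - 1) * e

/-- Pascal rule for the `q`-trinomial coefficient `C(m+1,ν) C(ν,k)`. -/
theorem qtrinomial {m : ℤ} (hm : 0 ≤ m) (ν k : ℤ) :
    qbinomZ (m + 1) ν * qbinomZ ν k =
      qbinomZ m (ν - 1) * qbinomZ (ν - 1) (k - 1)
        + T (k + (m + 1 - ν)) * (qbinomZ m (ν - 1) * qbinomZ (ν - 1) k)
        + T k * (qbinomZ m ν * qbinomZ ν k) := by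
  rcases lt_trichotomy ν 0 with h | rfl | h
  · rw [qbinomZ_of_neg _ h, qbinomZ_of_neg _ h, qbinomZ_of_neg m (k := ν - 1) (by omega)]; simp
  · rw [qbinomZ_of_neg m (k := 0 - 1) (by omega), qbinomZ_zero_right hm,
      qbinomZ_zero_right (by omega)]
    -- `C(0,k)` vanishes unless `k = 0`, where the factor `q^k` is `1`.
    rcases lt_trichotomy k 0 with h | rfl | h
    · rw [qbinomZ_of_neg _ h]; simp
    · simp
    · rw [qbinomZ_of_lt h]; simp
  · obtain ⟨n, rfl⟩ : ∃ n : ℤ, ν = n + 1 := ⟨ν - 1, by ring⟩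
    have hn : 0 ≤ n := by omega
    have p := qbinomZ_pascal hn k
    have a := qbinomZ_absorb hn k
    have p' := qbinomZ_pascal' hm (n + 1)
    have s := qbinomZ_step hm (n + 1)
    rw [T_add]
    simp only [add_sub_cancel_right] at *
    linear_combination qbinomZ (n + 1) k * p'
      + T (m + 1 - (n + 1)) * qbinomZ m n * p
      + qbinomZ m (n + 1) * a + qbinomZ n (k - 1) * s

/-- The sums defining `S` and `S̃` are finite: their terms vanish outside `0 ≤ ν ≤ m`. -/
theorem support_finite (m : ℤ) (f g : ℤ → LaurentPolynomial ℤ) :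
    (Function.support fun ν : ℤ => f ν * (qbinomZ m ν * g ν)).Finite := by
  refine (Set.finite_Icc (0 : ℤ) m).subset fun ν hν => ?_
  by_contra h
  refine hν ?_
  have : qbinomZ m ν = 0 := if_neg h
  simp [this]

/-- S_{m+1,l} = q^{-m-l-1} S_{m,l+1} + S_{m,l} + q^{-m+l-1} St_{m,l-1}. -/
theorem S_succ_rec1 (m : ℕ) (l : ℤ) :
    Sq (m + 1) l =
      T (-(m : ℤ) - l - 1) * Sq m (l + 1) + Sq m l + T (-(m : ℤ) + l - 1) * Sqt m (l - 1) := by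
  have shift : ∀ F : ℤ → LaurentPolynomial ℤ, ∑ᶠ ν, F ν = ∑ᶠ ν, F (ν - 1) := fun F =>
    (finsum_comp_equiv (Equiv.subRight (1 : ℤ)) (f := F)).symm
  have shift_fin : ∀ F : ℤ → LaurentPolynomial ℤ, (Function.support F).Finite →
      (Function.support fun ν => F (ν - 1)).Finite := fun F hF =>
    hF.preimage (f := fun ν : ℤ => ν - 1) (sub_left_injective.injOn)
  have mul_fin : ∀ (c : LaurentPolynomial ℤ) (F : ℤ → LaurentPolynomial ℤ),
      (Function.support F).Finite → (Function.support fun ν => c * F ν).Finite := fun c F hF =>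
    hF.subset (Function.support_mul_subset_right _ _)
  have f1 := support_finite m (fun ν => T ((ν + (l + 1) - m) * (ν + (l + 1)) + ν * (ν - m)))
    (fun ν => qbinomZ ν (m - (l + 1) - ν))
  have f2 := support_finite m (fun ν => T ((ν + l - m) * (ν + l) + ν * (ν - m)))
    (fun ν => qbinomZ ν (m - l - ν))
  have f3 := support_finite m
    (fun ν => T ((ν + (l - 1) - m) * (ν + (l - 1) - 1) + ν * (ν - m)))
    (fun ν => qbinomZ ν (m - (l - 1) - ν))
  unfold Sq Sqt
  rw [mul_finsum, mul_finsum, shift (fun ν => T (-(m : ℤ) - l - 1) * _),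
    shift (fun ν => T ((ν + l - m) * (ν + l) + ν * (ν - m)) * _),
    ← finsum_add_distrib (shift_fin _ (mul_fin _ _ f1)) (shift_fin _ f2),
    ← finsum_add_distrib
      (((shift_fin _ (mul_fin _ _ f1)).union (shift_fin _ f2)).subset
        (Function.support_add _ _)) (mul_fin _ _ f3)]
  refine finsum_congr fun ν => ?_
  have key := qtrinomial (m := m) (by positivity) ν (m + 1 - l - ν)
  push_cast
  rw [key, mul_add, mul_add]
  simp only [← mul_assoc, ← T_add]
  congr! 4 <;> ring_nf
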